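/- arXiv:2601.15449 — 2 statements merged into one kernel-verified Lean document; each statement's English description precedes it below -/
import Mathlib

section
/- Let (Ω, ℱ, P) be a probability space with random variables Z, A_0, A_1 : Ω → {0,1} and integrable Y_0, Y_1 : Ω → ℝ. Define observed treatment A = Z A_1 + (1−Z) A_0 and observed outcome Y = A Y_1 + (1−A) Y_0. Assume: (i) Z is independent of the vector (A_0, A_1, Y_0, Y_1); (ii) monotonicity: A_1 ≥ A_0 almost surely; (iii) relevance: P(A_1 = 1, A_0 = 0) > 0; and (iv) 0 < P(Z = 1) < 1. Then E[Y | Z = 1] − E[Y | Z = 0] = E[(Y_1 − Y_0) · 1{A_1 = 1, A_0 = 0}] and E[A | Z = 1] − E[A | Z = 0] = P(A_1 = 1, A_0 = 0), so the Wald ratio identifies the local average treatment effect: (E[Y | Z = 1] − E[Y | Z = 0]) / (E[A | Z = 1] − E[A | Z = 0]) = E[Y_1 − Y_0 | A_1 = 1, A_0 = 0]. -/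
open MeasureTheory ProbabilityTheory

/-!
On the event `Z = z` the observed treatment is the potential treatment `A_z`, and independence of
the instrument then removes the conditioning: `E[Y | Z = z]` is the mean of the outcome realized
under `A_z`. Subtracting, the outcome contrast is `E[(A₁ - A₀) (Y₁ - Y₀)]` and the treatment
contrast is `E[A₁ - A₀]`. By monotonicity `A₁ - A₀` is almost surely the indicator of the compliers,
so the Wald ratio is the average of `Y₁ - Y₀` over the compliers.
-/

theorem norm_le_one_of_eq_zero_or_eq_one {b : ℝ} (hb : b = 0 ∨ b = 1) : ‖b‖ ≤ 1 := by
  rcases hb with rfl | rfl <;> simp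

section Conditioning

variable {Ω 𝓩 F E : Type*} [MeasurableSpace Ω] [MeasurableSpace 𝓩] [MeasurableSingletonClass 𝓩]
  [MeasurableSpace F] [NormedAddCommGroup E] [NormedSpace ℝ E] {μ : Measure Ω} {s t : Set Ω}

theorem measure_pos_of_forall_mem_or_mem [IsProbabilityMeasure μ] (hst : ∀ x, x ∈ s ∨ x ∈ t)
    (ht : μ t < 1) : 0 < μ s := by
  refine pos_iff_ne_zero.mpr fun hs => ht.not_ge ?_
  calc 1 = μ (s ∪ t) := by rw [Set.eq_univ_of_forall (s := s ∪ t) hst, measure_univ]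
    _ ≤ μ s + μ t := measure_union_le s t
    _ = μ t := by rw [hs, zero_add]

theorem measureReal_smul_integral_cond (hs : μ s ≠ ⊤) (f : Ω → E) :
    μ.real s • ∫ x, f x ∂μ[|s] = ∫ x in s, f x ∂μ := by
  rw [ProbabilityTheory.cond, ← setAverage_eq', measure_smul_setAverage f hs]

theorem integral_cond_fiber_eq_of_indepFun [IsFiniteMeasure μ] {Z : Ω → 𝓩} {z : 𝓩} {V : Ω → F}
    {g : F → E} {W : Ω → E} (hZ : Measurable Z) (hV : AEMeasurable V μ)
    (hg : AEStronglyMeasurable g (μ.map V)) (hindep : IndepFun Z V μ) (hz : 0 < μ {x | Z x = z})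
    (hW : ∀ x, Z x = z → W x = g (V x)) :
    ∫ x, W x ∂μ[|{x | Z x = z}] = ∫ x, g (V x) ∂μ := by
  have hfiber : MeasurableSet[MeasurableSpace.comap Z inferInstance] {x | Z x = z} :=
    ⟨{z}, measurableSet_singleton z, rfl⟩
  refine smul_right_injective E ((measureReal_ne_zero_iff).mpr hz.ne') ?_
  calc μ.real {x | Z x = z} • ∫ x, W x ∂μ[|{x | Z x = z}]
      = ∫ x in {x | Z x = z}, W x ∂μ := measureReal_smul_integral_cond (measure_ne_top _ _) W
    _ = ∫ x in {x | Z x = z}, g (V x) ∂μ := setIntegral_congr_fun (hZ.comap_le _ hfiber) hW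
    _ = μ.real {x | Z x = z} • ∫ x, g (V x) ∂μ :=
        Indep.setIntegral_eq_smul hZ.comap_le hindep hV hfiber hg

end Conditioning

section PotentialOutcomes

variable {Ω E : Type*} {A₀ A₁ B : Ω → ℝ} {Y₀ Y₁ : Ω → E}

/-- The compliers: the units that take the treatment under the instrument value of `A₁` but not
under that of `A₀`. -/
def compliers (A₀ A₁ : Ω → ℝ) : Set Ω := {x | A₁ x = 1 ∧ A₀ x = 0}

/-- The outcome of each unit when the treatment received is `B`, given the potential outcomes
without (`Y₀`) and with (`Y₁`) treatment. Being affine in `B`, it makes sense for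
real-valued `B`. -/
def realizedOutcome [AddCommGroup E] [Module ℝ E] (B : Ω → ℝ) (Y₀ Y₁ : Ω → E) (x : Ω) : E :=
  B x • Y₁ x + (1 - B x) • Y₀ x

theorem realizedOutcome_sub_realizedOutcome [AddCommGroup E] [Module ℝ E] (x : Ω) :
    realizedOutcome A₁ Y₀ Y₁ x - realizedOutcome A₀ Y₀ Y₁ x = (A₁ x - A₀ x) • (Y₁ x - Y₀ x) := by
  unfold realizedOutcome
  module

theorem sub_eq_indicator_compliers {x : Ω} (h₀ : A₀ x = 0 ∨ A₀ x = 1) (h₁ : A₁ x = 0 ∨ A₁ x = 1)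
    (hle : A₀ x ≤ A₁ x) : A₁ x - A₀ x = (compliers A₀ A₁).indicator 1 x := by
  rcases h₀ with h₀ | h₀ <;> rcases h₁ with h₁ | h₁
  case inr.inl => norm_num [h₀, h₁] at hle
  all_goals simp [compliers, h₀, h₁]

variable [MeasurableSpace Ω] {μ : Measure Ω}

theorem measurableSet_compliers (hA₀ : Measurable A₀) (hA₁ : Measurable A₁) :
    MeasurableSet (compliers A₀ A₁) :=
  (hA₁ (measurableSet_singleton 1)).inter (hA₀ (measurableSet_singleton 0))

variable [NormedAddCommGroup E] [NormedSpace ℝ E]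

theorem integrable_realizedOutcome (hB : AEStronglyMeasurable B μ) {C : ℝ}
    (hbound : ∀ᵐ x ∂μ, ‖B x‖ ≤ C) (hY₀ : Integrable Y₀ μ) (hY₁ : Integrable Y₁ μ) :
    Integrable (realizedOutcome B Y₀ Y₁) μ := by
  have hdiff : Integrable (fun x => B x • (Y₁ x - Y₀ x)) μ := (hY₁.sub hY₀).bdd_smul C hB hbound
  refine (hdiff.add hY₀).congr (ae_of_all _ fun x => ?_)
  simp only [Pi.add_apply, realizedOutcome]
  module

theorem integral_realizedOutcome_sub_eq_integral_indicator
    (hA₀ : Measurable A₀) (hA₁ : Measurable A₁)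
    (h₀ : ∀ x, A₀ x = 0 ∨ A₀ x = 1) (h₁ : ∀ x, A₁ x = 0 ∨ A₁ x = 1)
    (hY₀ : Integrable Y₀ μ) (hY₁ : Integrable Y₁ μ) (hmono : ∀ᵐ x ∂μ, A₀ x ≤ A₁ x) :
    ∫ x, realizedOutcome A₁ Y₀ Y₁ x ∂μ - ∫ x, realizedOutcome A₀ Y₀ Y₁ x ∂μ
      = ∫ x, (compliers A₀ A₁).indicator (fun x => Y₁ x - Y₀ x) x ∂μ := by
  have hint {B : Ω → ℝ} (hB : Measurable B) (hB01 : ∀ x, B x = 0 ∨ B x = 1) :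
      Integrable (realizedOutcome B Y₀ Y₁) μ :=
    integrable_realizedOutcome hB.aestronglyMeasurable
      (ae_of_all _ fun x => norm_le_one_of_eq_zero_or_eq_one (hB01 x)) hY₀ hY₁
  rw [← integral_sub (hint hA₁ h₁) (hint hA₀ h₀)]
  refine integral_congr_ae (hmono.mono fun x hx => ?_)
  calc realizedOutcome A₁ Y₀ Y₁ x - realizedOutcome A₀ Y₀ Y₁ x
      = (A₁ x - A₀ x) • (Y₁ x - Y₀ x) := realizedOutcome_sub_realizedOutcome x
    _ = (compliers A₀ A₁).indicator 1 x • (Y₁ x - Y₀ x) := by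
        rw [sub_eq_indicator_compliers (h₀ x) (h₁ x) hx]
    _ = (compliers A₀ A₁).indicator (fun x => Y₁ x - Y₀ x) x := by
        by_cases hcomplier : x ∈ compliers A₀ A₁ <;> simp [hcomplier]

-- The treatment received is the outcome realized from the potential outcomes `0` and `1`.
theorem integral_sub_eq_measureReal_compliers [IsFiniteMeasure μ]
    (hA₀ : Measurable A₀) (hA₁ : Measurable A₁)
    (h₀ : ∀ x, A₀ x = 0 ∨ A₀ x = 1) (h₁ : ∀ x, A₁ x = 0 ∨ A₁ x = 1)
    (hmono : ∀ᵐ x ∂μ, A₀ x ≤ A₁ x) :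
    ∫ x, A₁ x ∂μ - ∫ x, A₀ x ∂μ = μ.real (compliers A₀ A₁) := by
  rw [← integral_indicator_one (measurableSet_compliers hA₀ hA₁)]
  simpa [realizedOutcome, Pi.one_def] using
    integral_realizedOutcome_sub_eq_integral_indicator hA₀ hA₁ h₀ h₁
      (integrable_const (0 : ℝ)) (integrable_const (1 : ℝ)) hmono

end PotentialOutcomes

section Instrument

variable {Ω 𝓩 E : Type*} [MeasurableSpace Ω] [MeasurableSpace 𝓩] [MeasurableSingletonClass 𝓩]
  [NormedAddCommGroup E] [NormedSpace ℝ E] [MeasurableSpace E] [BorelSpace E]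
  [SecondCountableTopology E] {μ : Measure Ω}

theorem integral_cond_fiber_eq_integral_realizedOutcome [IsFiniteMeasure μ] {Z : Ω → 𝓩} {z : 𝓩}
    {A B : Ω → ℝ} {Y₀ Y₁ : Ω → E} (hZ : Measurable Z) (hB : AEMeasurable B μ)
    (hY₀ : AEMeasurable Y₀ μ) (hY₁ : AEMeasurable Y₁ μ)
    (hindep : IndepFun Z (fun x => (B x, Y₀ x, Y₁ x)) μ) (hz : 0 < μ {x | Z x = z})
    (hA : ∀ x, Z x = z → A x = B x) :
    ∫ x, realizedOutcome A Y₀ Y₁ x ∂μ[|{x | Z x = z}] = ∫ x, realizedOutcome B Y₀ Y₁ x ∂μ := by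
  let g (v : ℝ × E × E) : E := v.1 • v.2.2 + (1 - v.1) • v.2.1
  have hg : Measurable g := by fun_prop
  exact integral_cond_fiber_eq_of_indepFun (g := g) hZ (hB.prodMk (hY₀.prodMk hY₁))
    hg.aestronglyMeasurable hindep hz fun x hx => by simp only [g, realizedOutcome, hA x hx]

/-- The instrument may take further values: `z₀` and `z₁` are the two being compared, and `A₀`, `A₁`
are the potential treatments under them. -/
theorem stmt_17_general [CompleteSpace E] [IsProbabilityMeasure μ]
    {Z : Ω → 𝓩} {z₀ z₁ : 𝓩} {A₀ A₁ A : Ω → ℝ} {Y₀ Y₁ Y : Ω → E}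
    (hZmeas : Measurable Z) (hA₀meas : Measurable A₀) (hA₁meas : Measurable A₁)
    (hA₀01 : ∀ x, A₀ x = 0 ∨ A₀ x = 1) (hA₁01 : ∀ x, A₁ x = 0 ∨ A₁ x = 1)
    (hY₀int : Integrable Y₀ μ) (hY₁int : Integrable Y₁ μ)
    (hA₀ : ∀ x, Z x = z₀ → A x = A₀ x) (hA₁ : ∀ x, Z x = z₁ → A x = A₁ x)
    (hY : ∀ x, Y x = realizedOutcome A Y₀ Y₁ x)
    (hindep : IndepFun Z (fun x => (A₀ x, A₁ x, Y₀ x, Y₁ x)) μ)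
    (hmono : ∀ᵐ x ∂μ, A₀ x ≤ A₁ x)
    (hrel : 0 < μ (compliers A₀ A₁))
    (hz₀ : 0 < μ {x | Z x = z₀}) (hz₁ : 0 < μ {x | Z x = z₁}) :
    (∫ x, Y x ∂μ[|{x | Z x = z₁}]) - (∫ x, Y x ∂μ[|{x | Z x = z₀}])
        = ∫ x, (compliers A₀ A₁).indicator (fun x => Y₁ x - Y₀ x) x ∂μ
    ∧ (∫ x, A x ∂μ[|{x | Z x = z₁}]) - (∫ x, A x ∂μ[|{x | Z x = z₀}])
        = μ.real (compliers A₀ A₁)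
    ∧ ((∫ x, A x ∂μ[|{x | Z x = z₁}]) - (∫ x, A x ∂μ[|{x | Z x = z₀}]))⁻¹
        • ((∫ x, Y x ∂μ[|{x | Z x = z₁}]) - (∫ x, Y x ∂μ[|{x | Z x = z₀}]))
        = ∫ x, (Y₁ x - Y₀ x) ∂μ[|compliers A₀ A₁] := by
  have hindep₀ : IndepFun Z (fun x => (A₀ x, Y₀ x, Y₁ x)) μ :=
    hindep.comp measurable_id (measurable_fst.prodMk measurable_snd.snd)
  have hindep₁ : IndepFun Z (fun x => (A₁ x, Y₀ x, Y₁ x)) μ :=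
    hindep.comp measurable_id measurable_snd
  have outcome_mean₀ := integral_cond_fiber_eq_integral_realizedOutcome hZmeas
    hA₀meas.aemeasurable hY₀int.aemeasurable hY₁int.aemeasurable hindep₀ hz₀ hA₀
  have outcome_mean₁ := integral_cond_fiber_eq_integral_realizedOutcome hZmeas
    hA₁meas.aemeasurable hY₀int.aemeasurable hY₁int.aemeasurable hindep₁ hz₁ hA₁
  have treatment_mean₀ : ∫ x, A x ∂μ[|{x | Z x = z₀}] = ∫ x, A₀ x ∂μ :=
    integral_cond_fiber_eq_of_indepFun (g := id) hZmeas hA₀meas.aemeasurable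
      aestronglyMeasurable_id (hindep₀.comp measurable_id measurable_fst) hz₀ hA₀
  have treatment_mean₁ : ∫ x, A x ∂μ[|{x | Z x = z₁}] = ∫ x, A₁ x ∂μ :=
    integral_cond_fiber_eq_of_indepFun (g := id) hZmeas hA₁meas.aemeasurable
      aestronglyMeasurable_id (hindep₁.comp measurable_id measurable_fst) hz₁ hA₁
  have hcompliers : μ.real (compliers A₀ A₁) ≠ 0 := (measureReal_ne_zero_iff).mpr hrel.ne'
  simp only [hY]
  rw [outcome_mean₀, outcome_mean₁, treatment_mean₀, treatment_mean₁,
    integral_realizedOutcome_sub_eq_integral_indicator hA₀meas hA₁meas hA₀01 hA₁01 hY₀int hY₁int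
      hmono,
    integral_sub_eq_measureReal_compliers hA₀meas hA₁meas hA₀01 hA₁01 hmono]
  refine ⟨rfl, rfl, ?_⟩
  rw [inv_smul_eq_iff₀ hcompliers, measureReal_smul_integral_cond (measure_ne_top _ _),
    integral_indicator (measurableSet_compliers hA₀meas hA₁meas)]

end Instrument

/-- Identification of the local average treatment effect: under independence of the instrument,
monotonicity, relevance, and a nondegenerate instrument, the Wald ratio equals the average
treatment effect among compliers. -/
theorem stmt_17 {Ω : Type*} [MeasurableSpace Ω] (μ : Measure Ω) [IsProbabilityMeasure μ]
    (Z A₀ A₁ Y₀ Y₁ : Ω → ℝ)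
    (hZmeas : Measurable Z) (hA₀meas : Measurable A₀) (hA₁meas : Measurable A₁)
    (hY₀meas : Measurable Y₀) (hY₁meas : Measurable Y₁)
    (hZ01 : ∀ x, Z x = 0 ∨ Z x = 1) (hA₀01 : ∀ x, A₀ x = 0 ∨ A₀ x = 1)
    (hA₁01 : ∀ x, A₁ x = 0 ∨ A₁ x = 1)
    (hY₀int : Integrable Y₀ μ) (hY₁int : Integrable Y₁ μ)
    (A Y : Ω → ℝ)
    (hA : ∀ x, A x = Z x * A₁ x + (1 - Z x) * A₀ x)
    (hY : ∀ x, Y x = A x * Y₁ x + (1 - A x) * Y₀ x)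
    (hindep : IndepFun Z (fun x => (A₀ x, A₁ x, Y₀ x, Y₁ x)) μ)
    (hmono : ∀ᵐ x ∂μ, A₀ x ≤ A₁ x)
    (hrel : 0 < μ {x | A₁ x = 1 ∧ A₀ x = 0})
    (hZpos : 0 < μ {x | Z x = 1}) (hZlt : μ {x | Z x = 1} < 1) :
    (∫ x, Y x ∂(μ[|{x | Z x = 1}])) - (∫ x, Y x ∂(μ[|{x | Z x = 0}]))
        = ∫ x, Set.indicator {x | A₁ x = 1 ∧ A₀ x = 0} (fun x => Y₁ x - Y₀ x) x ∂μ
    ∧ (∫ x, A x ∂(μ[|{x | Z x = 1}])) - (∫ x, A x ∂(μ[|{x | Z x = 0}]))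
        = (μ {x | A₁ x = 1 ∧ A₀ x = 0}).toReal
    ∧ ((∫ x, Y x ∂(μ[|{x | Z x = 1}])) - (∫ x, Y x ∂(μ[|{x | Z x = 0}])))
        / ((∫ x, A x ∂(μ[|{x | Z x = 1}])) - (∫ x, A x ∂(μ[|{x | Z x = 0}])))
        = ∫ x, (Y₁ x - Y₀ x) ∂(μ[|{x | A₁ x = 1 ∧ A₀ x = 0}]) := by
  have hZ0pos : 0 < μ {x | Z x = 0} := measure_pos_of_forall_mem_or_mem hZ01 hZlt
  rw [div_eq_inv_mul]
  exact stmt_17_general hZmeas hA₀meas hA₁meas hA₀01 hA₁01 hY₀int hY₁int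
    (fun x hx => by simp [hA, hx]) (fun x hx => by simp [hA, hx]) hY hindep hmono hrel hZ0pos hZpos
end

section
/- Let (Ω, ℱ, P) be a probability space, X : Ω → ℝ^d a random vector generating the σ-algebra σ(X), Z : Ω → {0,1} a treatment indicator, and Y_0, Y_1 : Ω → ℝ bounded random variables with observed outcome Y = Z Y_1 + (1−Z) Y_0. Suppose there is a measurable function e : ℝ^d → ℝ and a constant c ∈ (0, 1/2) such that c ≤ e(x) ≤ 1 − c for all x, E[Z | σ(X)] = e(X) almost surely, and the pair (Y_0, Y_1) is conditionally independent of Z given σ(X). Then E[Z Y / e(X) − (1−Z) Y / (1 − e(X))] = E[Y_1 − Y_0]; that is, the inverse-probability-weighted contrast identifies the average treatment effect τ = E[Y_1 − Y_0]. -/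
open MeasureTheory ProbabilityTheory

/-!
Each arm of the weighted contrast is the identity `E[B A / E[B | m]] = E[A]`, for `A` and `B ≥ 0`
conditionally independent given `m`: conditionally on `m` the weight is a constant and `E[B A | m]`
factors, so `E[B | m]` cancels. The treated arm is `(A, B) = (Y₁, Z)` and the control arm is
`(A, B) = (Y₀, 1 - Z)`. The weight may be unbounded; that `B A / E[B | m]` is integrable follows
from the same cancellation for `|A|`, performed with integrals in `[0, ∞]`.
-/

section ConditionalExpectation

variable {Ω : Type*} {m mΩ : MeasurableSpace Ω} {μ : Measure Ω}

lemma trim_withDensity_condLExp (hm : m ≤ mΩ) [SigmaFinite (μ.trim hm)] (f : Ω → ENNReal) :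
    (μ.withDensity (μ⁻[f | m])).trim hm = (μ.withDensity f).trim hm := by
  refine @Measure.ext _ m _ _ fun s hs ↦ ?_
  rw [trim_measurableSet_eq hm hs, trim_measurableSet_eq hm hs, withDensity_apply _ (hm s hs),
    withDensity_apply _ (hm s hs), setLIntegral_condLExp hm μ f hs]

lemma lintegral_mul_condLExp (hm : m ≤ mΩ) [SigmaFinite (μ.trim hm)] {f g : Ω → ENNReal}
    (hg : Measurable[m] g) (hf : AEMeasurable f μ) :
    ∫⁻ ω, g ω * μ⁻[f | m] ω ∂μ = ∫⁻ ω, g ω * f ω ∂μ := by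
  have lintegral_mul_eq_trim {h : Ω → ENNReal} (hh : AEMeasurable h μ) :
      ∫⁻ ω, g ω * h ω ∂μ = ∫⁻ ω, g ω ∂(μ.withDensity h).trim hm := by
    rw [lintegral_trim hm hg, lintegral_withDensity_eq_lintegral_mul₀ hh
      (hg.mono hm le_rfl).aemeasurable]
    simp only [Pi.mul_apply, mul_comm]
  rw [lintegral_mul_eq_trim (by fun_prop), lintegral_mul_eq_trim hf, trim_withDensity_condLExp]

lemma integrable_mul_condExp_iff (hm : m ≤ mΩ) [SigmaFinite (μ.trim hm)] {f g : Ω → ℝ}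
    (hg : StronglyMeasurable[m] g) (hf : Integrable f μ) (hf_nonneg : 0 ≤ᵐ[μ] f) :
    Integrable (g * μ[f | m]) μ ↔ Integrable (g * f) μ := by
  have hgμ : AEStronglyMeasurable g μ := (hg.mono hm).aestronglyMeasurable
  have lintegral_enorm_eq : ∫⁻ ω, ‖(g * μ[f | m]) ω‖ₑ ∂μ = ∫⁻ ω, ‖(g * f) ω‖ₑ ∂μ := by
    simp only [Pi.mul_apply, enorm_mul]
    rw [← lintegral_mul_condLExp hm hg.enorm hf.aestronglyMeasurable.enorm]
    refine lintegral_congr_ae ?_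
    filter_upwards [condLExp_enorm m hf hf_nonneg] with ω hω
    rw [hω]
  simp only [Integrable, HasFiniteIntegral, lintegral_enorm_eq, hgμ.mul hf.aestronglyMeasurable,
    hgμ.mul integrable_condExp.aestronglyMeasurable]

lemma condExp_const_sub {E : Type*} [NormedAddCommGroup E] [NormedSpace ℝ E] [CompleteSpace E]
    [IsFiniteMeasure μ] (hm : m ≤ mΩ) (a : E) {f : Ω → E} (hf : Integrable f μ) :
    μ[fun ω ↦ a - f ω | m] =ᵐ[μ] fun ω ↦ a - μ[f | m] ω := by
  have h := condExp_sub (integrable_const (μ := μ) a) hf m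
  rwa [condExp_const hm] at h

end ConditionalExpectation

section ConditionalIndependence

variable {Ω : Type*} {m mΩ : MeasurableSpace Ω} [StandardBorelSpace Ω] {hm : m ≤ mΩ}
  {μ : Measure Ω} [IsFiniteMeasure μ]

lemma ae_indepFun_condExpKernel_of_condIndepFun {β γ : Type*} {mβ : MeasurableSpace β}
    {mγ : MeasurableSpace γ} [MeasurableSpace.CountableOrCountablyGenerated Ω (β × γ)]
    {f : Ω → β} {g : Ω → γ} (hf : Measurable f) (hg : Measurable g)
    (hfg : CondIndepFun m hm f g μ) :
    ∀ᵐ ω ∂μ, IndepFun f g (condExpKernel μ m ω) := by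
  filter_upwards [ae_of_ae_trim hm ((condIndepFun_iff_map_prod_eq_prod_map_map hf hg).1 hfg)]
    with ω hω
  rw [indepFun_iff_map_prod_eq_prod_map_map hf.aemeasurable hg.aemeasurable]
  rwa [Kernel.map_apply _ (hf.prodMk hg), Kernel.prod_apply, Kernel.map_apply _ hf,
    Kernel.map_apply _ hg] at hω

lemma condExp_mul_of_condIndepFun {𝕜 : Type*} [RCLike 𝕜] {f g : Ω → 𝕜}
    (hf : Measurable f) (hg : Measurable g) (hf_int : Integrable f μ) (hg_int : Integrable g μ)
    (hfg_int : Integrable (f * g) μ) (hfg : CondIndepFun m hm f g μ) :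
    μ[f * g | m] =ᵐ[μ] μ[f | m] * μ[g | m] := by
  filter_upwards [ae_indepFun_condExpKernel_of_condIndepFun hf hg hfg,
    condExp_ae_eq_integral_condExpKernel hm hf_int, condExp_ae_eq_integral_condExpKernel hm hg_int,
    condExp_ae_eq_integral_condExpKernel hm hfg_int] with ω hω hfω hgω hfgω
  rw [Pi.mul_apply, hfω, hgω, hfgω]
  exact hω.integral_mul_eq_mul_integral hf.aestronglyMeasurable hg.aestronglyMeasurable

end ConditionalIndependence

section InverseProbabilityWeighting

/-- The inverse-probability-weighted outcome `B A / E[B | m]`: `A` is the potential outcome of one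
treatment arm, `B` is the indicator of assignment to that arm, and `E[B | m]` is the propensity
score of the arm given the covariate information `m`. It is `0` where the propensity vanishes. -/
noncomputable def ipwOutcome {Ω : Type*} (m : MeasurableSpace Ω) {_ : MeasurableSpace Ω}
    (μ : Measure Ω) (A B : Ω → ℝ) : Ω → ℝ :=
  fun ω ↦ B ω * A ω / μ[B | m] ω

variable {Ω : Type*} {m mΩ : MeasurableSpace Ω} {μ : Measure Ω} {A B : Ω → ℝ}

lemma ipwOutcome_eq_inv_mul : ipwOutcome m μ A B = μ[B | m]⁻¹ * (A * B) := by
  ext ω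
  simp only [ipwOutcome, Pi.mul_apply, Pi.inv_apply]
  ring

lemma stronglyMeasurable_inv_condExp : StronglyMeasurable[m] μ[B | m]⁻¹ :=
  stronglyMeasurable_condExp.measurable.inv.stronglyMeasurable

variable [StandardBorelSpace Ω] {hm : m ≤ mΩ} [IsFiniteMeasure μ]

lemma inv_condExp_mul_condExp_mul_of_condIndepFun (hA : Measurable A) (hB : Measurable B)
    (hA_int : Integrable A μ) (hB_int : Integrable B μ) (hAB_int : Integrable (A * B) μ)
    (hAB : CondIndepFun m hm A B μ) (hB_ne : ∀ᵐ ω ∂μ, μ[B | m] ω ≠ 0) :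
    μ[B | m]⁻¹ * μ[A * B | m] =ᵐ[μ] μ[A | m] := by
  filter_upwards [condExp_mul_of_condIndepFun hA hB hA_int hB_int hAB_int hAB, hB_ne]
    with ω hω hω_ne
  rw [Pi.mul_apply, hω, Pi.mul_apply, Pi.inv_apply, mul_comm, mul_inv_cancel_right₀ hω_ne]

lemma integrable_ipwOutcome_of_nonneg (hA : Measurable A) (hB : Measurable B)
    (hA_int : Integrable A μ) (hB_int : Integrable B μ) (hAB_int : Integrable (A * B) μ)
    (hAB_nonneg : 0 ≤ᵐ[μ] A * B) (hAB : CondIndepFun m hm A B μ)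
    (hB_ne : ∀ᵐ ω ∂μ, μ[B | m] ω ≠ 0) :
    Integrable (ipwOutcome m μ A B) μ := by
  rw [ipwOutcome_eq_inv_mul,
    ← integrable_mul_condExp_iff hm stronglyMeasurable_inv_condExp hAB_int hAB_nonneg]
  exact integrable_condExp.congr
    (inv_condExp_mul_condExp_mul_of_condIndepFun hA hB hA_int hB_int hAB_int hAB hB_ne).symm

lemma integrable_ipwOutcome (hA : Measurable A) (hB : Measurable B)
    (hA_int : Integrable A μ) (hB_int : Integrable B μ) (hAB_int : Integrable (A * B) μ)
    (hB_nonneg : 0 ≤ᵐ[μ] B) (hAB : CondIndepFun m hm A B μ)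
    (hB_ne : ∀ᵐ ω ∂μ, μ[B | m] ω ≠ 0) :
    Integrable (ipwOutcome m μ A B) μ := by
  have abs_mul_ae_eq : |A * B| =ᵐ[μ] |A| * B := by
    filter_upwards [hB_nonneg] with ω hω
    simp only [Pi.abs_apply, Pi.mul_apply, abs_mul, abs_of_nonneg hω]
  have abs_mul_nonneg : 0 ≤ᵐ[μ] |A| * B := by
    filter_upwards [hB_nonneg] with ω hω using mul_nonneg (abs_nonneg _) hω
  have integrable_abs : Integrable (ipwOutcome m μ |A| B) μ :=
    integrable_ipwOutcome_of_nonneg hA.abs hB hA_int.abs hB_int (hAB_int.abs.congr abs_mul_ae_eq)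
      abs_mul_nonneg (hAB.comp measurable_abs measurable_id) hB_ne
  refine integrable_abs.mono ?_ (ae_of_all _ fun ω ↦ ?_)
  · rw [ipwOutcome_eq_inv_mul]
    exact (stronglyMeasurable_inv_condExp.mono hm).aestronglyMeasurable.mul
      hAB_int.aestronglyMeasurable
  · simp [ipwOutcome]

lemma integral_ipwOutcome (hA : Measurable A) (hB : Measurable B)
    (hA_int : Integrable A μ) (hB_int : Integrable B μ) (hAB_int : Integrable (A * B) μ)
    (hipw_int : Integrable (ipwOutcome m μ A B) μ) (hAB : CondIndepFun m hm A B μ)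
    (hB_ne : ∀ᵐ ω ∂μ, μ[B | m] ω ≠ 0) :
    ∫ ω, ipwOutcome m μ A B ω ∂μ = ∫ ω, A ω ∂μ := by
  rw [ipwOutcome_eq_inv_mul] at hipw_int ⊢
  calc ∫ ω, (μ[B | m]⁻¹ * (A * B)) ω ∂μ
    _ = ∫ ω, μ[μ[B | m]⁻¹ * (A * B) | m] ω ∂μ := (integral_condExp hm).symm
    _ = ∫ ω, (μ[B | m]⁻¹ * μ[A * B | m]) ω ∂μ := integral_congr_ae <|
      condExp_mul_of_stronglyMeasurable_left stronglyMeasurable_inv_condExp hipw_int hAB_int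
    _ = ∫ ω, μ[A | m] ω ∂μ := integral_congr_ae <|
      inv_condExp_mul_condExp_mul_of_condIndepFun hA hB hA_int hB_int hAB_int hAB hB_ne
    _ = ∫ ω, A ω ∂μ := integral_condExp hm

lemma integrable_and_integral_ipwOutcome_of_mem_Icc (hA : Measurable A) (hB : Measurable B)
    (hA_int : Integrable A μ) (hB_mem : ∀ᵐ ω ∂μ, B ω ∈ Set.Icc 0 1)
    (hAB : CondIndepFun m hm A B μ) (hB_ne : ∀ᵐ ω ∂μ, μ[B | m] ω ≠ 0) :
    Integrable (ipwOutcome m μ A B) μ ∧ ∫ ω, ipwOutcome m μ A B ω ∂μ = ∫ ω, A ω ∂μ := by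
  have hB_nonneg : 0 ≤ᵐ[μ] B := hB_mem.mono fun ω hω ↦ hω.1
  have hB_bound : ∀ᵐ ω ∂μ, ‖B ω‖ ≤ 1 :=
    hB_mem.mono fun ω hω ↦ (Real.norm_of_nonneg hω.1).trans_le hω.2
  have hB_int : Integrable B μ := .of_mem_Icc 0 1 hB.aemeasurable hB_mem
  have hAB_int : Integrable (A * B) μ := hA_int.mul_bdd hB.aestronglyMeasurable hB_bound
  have hipw_int := integrable_ipwOutcome hA hB hA_int hB_int hAB_int hB_nonneg hAB hB_ne
  exact ⟨hipw_int, integral_ipwOutcome hA hB hA_int hB_int hAB_int hipw_int hAB hB_ne⟩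

lemma integral_ipwOutcome_sub_ipwOutcome {Y₀ Y₁ Z : Ω → ℝ} (hY₀ : Measurable Y₀)
    (hY₁ : Measurable Y₁) (hZ : Measurable Z) (hY₀_int : Integrable Y₀ μ)
    (hY₁_int : Integrable Y₁ μ) (hZ_mem : ∀ᵐ ω ∂μ, Z ω ∈ Set.Icc 0 1)
    (hunconf₀ : CondIndepFun m hm Y₀ Z μ) (hunconf₁ : CondIndepFun m hm Y₁ Z μ)
    (htreated_ne : ∀ᵐ ω ∂μ, μ[Z | m] ω ≠ 0)
    (hcontrol_ne : ∀ᵐ ω ∂μ, μ[fun ω ↦ 1 - Z ω | m] ω ≠ 0) :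
    ∫ ω, (ipwOutcome m μ Y₁ Z ω - ipwOutcome m μ Y₀ (fun ω ↦ 1 - Z ω) ω) ∂μ
      = ∫ ω, (Y₁ ω - Y₀ ω) ∂μ := by
  obtain ⟨treated_int, treated_eq⟩ :=
    integrable_and_integral_ipwOutcome_of_mem_Icc hY₁ hZ hY₁_int hZ_mem hunconf₁ htreated_ne
  obtain ⟨control_int, control_eq⟩ :=
    integrable_and_integral_ipwOutcome_of_mem_Icc hY₀ (hZ.const_sub 1) hY₀_int
      (hZ_mem.mono fun _ ↦ Set.Icc.mem_iff_one_sub_mem.1)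
      (hunconf₀.comp measurable_id (measurable_id.const_sub 1)) hcontrol_ne
  rw [integral_sub treated_int control_int, treated_eq, control_eq, integral_sub hY₁_int hY₀_int]

end InverseProbabilityWeighting

theorem stmt_18_general {Ω : Type*} {m mΩ : MeasurableSpace Ω} [StandardBorelSpace Ω]
    {hm : m ≤ mΩ} {μ : Measure Ω} [IsFiniteMeasure μ] {Z Y₀ Y₁ Y p : Ω → ℝ}
    (hZ : Measurable Z) (hZ01 : ∀ᵐ ω ∂μ, Z ω = 0 ∨ Z ω = 1)
    (hY₀ : Measurable Y₀) (hY₁ : Measurable Y₁)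
    (hY₀_int : Integrable Y₀ μ) (hY₁_int : Integrable Y₁ μ)
    (hY : ∀ᵐ ω ∂μ, Y ω = Z ω * Y₁ ω + (1 - Z ω) * Y₀ ω)
    (hp : μ[Z | m] =ᵐ[μ] p) (hp_mem : ∀ᵐ ω ∂μ, p ω ∈ Set.Ioo 0 1)
    (hunconf₀ : CondIndepFun m hm Y₀ Z μ) (hunconf₁ : CondIndepFun m hm Y₁ Z μ) :
    ∫ ω, (Z ω * Y ω / p ω - (1 - Z ω) * Y ω / (1 - p ω)) ∂μ = ∫ ω, (Y₁ ω - Y₀ ω) ∂μ := by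
  have hZ_mem : ∀ᵐ ω ∂μ, Z ω ∈ Set.Icc 0 1 := by
    filter_upwards [hZ01] with ω hω
    rcases hω with hω | hω <;> simp [hω]
  have hcontrol : μ[fun ω ↦ 1 - Z ω | m] =ᵐ[μ] fun ω ↦ 1 - p ω := by
    filter_upwards [condExp_const_sub hm 1 (.of_mem_Icc 0 1 hZ.aemeasurable hZ_mem), hp]
      with ω hω hpω
    rw [hω, hpω]
  have htreated_ne : ∀ᵐ ω ∂μ, μ[Z | m] ω ≠ 0 := by
    filter_upwards [hp, hp_mem] with ω hpω hω using hpω ▸ hω.1.ne'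
  have hcontrol_ne : ∀ᵐ ω ∂μ, μ[fun ω ↦ 1 - Z ω | m] ω ≠ 0 := by
    filter_upwards [hcontrol, hp_mem] with ω hpω hω using hpω ▸ (sub_pos.2 hω.2).ne'
  rw [← integral_ipwOutcome_sub_ipwOutcome hY₀ hY₁ hZ hY₀_int hY₁_int hZ_mem hunconf₀ hunconf₁
    htreated_ne hcontrol_ne]
  refine integral_congr_ae ?_
  filter_upwards [hZ01, hY, hp, hcontrol] with ω hZω hYω hpω hcontrolω
  rcases hZω with hZω | hZω <;> simp [ipwOutcome, hYω, hZω, hpω, hcontrolω]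

/-- Identification of the average treatment effect by inverse probability weighting: under
unconfoundedness (conditional independence of the potential outcomes and treatment given the
σ-algebra generated by the covariates) and overlap, the IPW contrast equals `E[Y₁ − Y₀]`. -/
theorem stmt_18 {d : ℕ} {Ω : Type*} {mΩ : MeasurableSpace Ω} [StandardBorelSpace Ω]
    (μ : Measure Ω) [IsProbabilityMeasure μ]
    (X : Ω → EuclideanSpace ℝ (Fin d)) (hX : Measurable X)
    (Z : Ω → ℝ) (hZmeas : Measurable Z) (hZ01 : ∀ x, Z x = 0 ∨ Z x = 1)
    (Y₀ Y₁ : Ω → ℝ) (hY₀meas : Measurable Y₀) (hY₁meas : Measurable Y₁)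
    (hbdd : ∃ M : ℝ, ∀ x, |Y₀ x| ≤ M ∧ |Y₁ x| ≤ M)
    (Y : Ω → ℝ) (hY : ∀ x, Y x = Z x * Y₁ x + (1 - Z x) * Y₀ x)
    (e : EuclideanSpace ℝ (Fin d) → ℝ) (he : Measurable e)
    (c : ℝ) (hc0 : 0 < c) (hchalf : c < 1 / 2)
    (hebd : ∀ v, c ≤ e v ∧ e v ≤ 1 - c)
    (hps : μ[Z|MeasurableSpace.comap X inferInstance] =ᵐ[μ] fun x => e (X x))
    (hunconf : CondIndepFun (MeasurableSpace.comap X inferInstance) hX.comap_le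
      (fun x => (Y₀ x, Y₁ x)) Z μ) :
    (∫ x, (Z x * Y x / e (X x) - (1 - Z x) * Y x / (1 - e (X x))) ∂μ)
      = ∫ x, (Y₁ x - Y₀ x) ∂μ := by
  obtain ⟨M, hM⟩ := hbdd
  exact stmt_18_general hZmeas (ae_of_all _ hZ01) hY₀meas hY₁meas
    (.of_bound hY₀meas.aestronglyMeasurable M (ae_of_all _ fun x ↦ (hM x).1))
    (.of_bound hY₁meas.aestronglyMeasurable M (ae_of_all _ fun x ↦ (hM x).2))
    (ae_of_all _ hY) hps
    (ae_of_all _ fun x ↦ ⟨hc0.trans_le (hebd (X x)).1, by linarith [(hebd (X x)).2]⟩)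
    (hunconf.comp measurable_fst measurable_id) (hunconf.comp measurable_snd measurable_id)
end
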